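/- For every δ with 0 < δ < e^{-3/2} and every s ∈ ℝ, one has 0 ≤ F₁(s) ≤ F₁'(s)·s, where F₁' denotes the derivative of F₁. -/

import Mathlib

noncomputable def F1 (δ s : ℝ) : ℝ :=
  if |s| < δ then -(1/2) * s^2 * Real.log (s^2)
  else -(1/2) * s^2 * (Real.log (δ^2) + 3) + 2*δ*|s| - (1/2)*δ^2

lemma F1_even (δ s : ℝ) : F1 δ (-s) = F1 δ s := by simp [F1]

lemma A_hasDeriv (s : ℝ) (hs : 0 < s) :
    HasDerivAt (fun s : ℝ => -(1/2) * s^2 * Real.log (s^2)) (-(2 * Real.log s + 1) * s) s := by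
  have h1 : HasDerivAt (fun s : ℝ => s^2) (2 * s) s := by simpa using hasDerivAt_pow 2 s
  have h := (h1.const_mul (-(1/2))).mul (h1.log (by positivity))
  refine h.congr_deriv ?_
  rw [Real.log_pow]
  field_simp
  push_cast
  ring

lemma B_hasDeriv (δ s : ℝ) (hs : 0 < s) :
    HasDerivAt (fun s : ℝ => -(1/2) * s^2 * (Real.log (δ^2) + 3) + 2*δ*|s| - (1/2)*δ^2)
      (-(2 * Real.log δ + 3) * s + 2 * δ) s := by
  have h1 : HasDerivAt (fun s : ℝ => s^2) (2 * s) s := by simpa using hasDerivAt_pow 2 s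
  have h := ((((h1.const_mul (-(1/2))).mul_const (Real.log (δ^2) + 3)).add
    ((hasDerivAt_abs_pos hs).const_mul (2*δ))).sub_const ((1/2)*δ^2))
  refine h.congr_deriv ?_
  rw [Real.log_pow]
  push_cast
  ring

lemma F1_deriv_lt (δ s : ℝ) (hs : 0 < s) (h : s < δ) :
    HasDerivAt (F1 δ) (-(2 * Real.log s + 1) * s) s := by
  refine (A_hasDeriv s hs).congr_of_eventuallyEq ?_
  filter_upwards [Ioo_mem_nhds hs h] with x hx
  have : |x| < δ := by rw [abs_of_pos hx.1]; exact hx.2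
  simp only [F1, if_pos this]

lemma F1_deriv_ge (δ s : ℝ) (hδ : 0 < δ) (h : δ ≤ s) :
    HasDerivAt (F1 δ) (-(2 * Real.log δ + 3) * s + 2 * δ) s := by
  have hs : 0 < s := hδ.trans_le h
  have key : ∀ x, δ ≤ x → F1 δ x =
      -(1/2) * x^2 * (Real.log (δ^2) + 3) + 2*δ*|x| - (1/2)*δ^2 := by
    intro x hx
    have : ¬ |x| < δ := by rw [abs_of_pos (hδ.trans_le hx)]; exact not_lt.mpr hx
    simp only [F1, if_neg this]
  rcases h.lt_or_eq with h | rfl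
  · refine (B_hasDeriv δ s hs).congr_of_eventuallyEq ?_
    filter_upwards [Ioi_mem_nhds h] with x hx
    exact key x (le_of_lt hx)
  · have hr : HasDerivWithinAt (F1 δ) (-(2 * Real.log δ + 3) * δ + 2 * δ) (Set.Ici δ) δ :=
      (B_hasDeriv δ δ hs).hasDerivWithinAt.congr (fun x hx => key x hx) (key δ le_rfl)
    have kd : F1 δ δ = -(1/2) * δ^2 * Real.log (δ^2) := by
      rw [key δ le_rfl, abs_of_pos hδ]; ring
    have hl : HasDerivWithinAt (F1 δ) (-(2 * Real.log δ + 3) * δ + 2 * δ) (Set.Iic δ) δ := by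
      have := (A_hasDeriv δ hs).hasDerivWithinAt (s := Set.Iic δ)
      refine (this.congr_of_eventuallyEq ?_ kd).congr_deriv (by ring)
      filter_upwards [self_mem_nhdsWithin, mem_nhdsWithin_of_mem_nhds (Ioi_mem_nhds hδ)]
        with x hx hx0
      rcases (show x ≤ δ from hx).lt_or_eq with h | rfl
      · have : |x| < δ := by rw [abs_of_pos hx0]; exact h
        simp only [F1, if_pos this]
      · exact kd
    have := hl.union hr
    rwa [Set.Iic_union_Ici, hasDerivWithinAt_univ] at this

lemma F1_pos_case (δ : ℝ) (hδ : 0 < δ) (hδ' : δ < Real.exp (-(3/2))) (s : ℝ) (hs : 0 < s) :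
    0 ≤ F1 δ s ∧ F1 δ s ≤ deriv (F1 δ) s * s := by
  have hL : Real.log δ < -(3/2) := (Real.log_lt_iff_lt_exp hδ).mpr hδ'
  have h2 : 0 < s^2 := by positivity
  rcases lt_or_ge s δ with h | h
  · have hl : Real.log s < -(3/2) := (Real.log_lt_log hs h).trans hL
    have ha : |s| < δ := by rwa [abs_of_pos hs]
    rw [(F1_deriv_lt δ s hs h).deriv]
    simp only [F1, if_pos ha, Real.log_pow]
    push_cast
    constructor <;> nlinarith
  · rw [(F1_deriv_ge δ s hδ h).deriv]
    simp only [F1, if_neg (not_lt.mpr h), Real.log_pow, abs_of_pos hs]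
    push_cast
    have h3 : 0 < s^2 * (-(2 * Real.log δ + 3)) := mul_pos h2 (by linarith)
    constructor <;> nlinarith

theorem stmt8 (δ : ℝ) (hδ : 0 < δ) (hδ' : δ < Real.exp (-(3/2))) (s : ℝ) :
    0 ≤ F1 δ s ∧ F1 δ s ≤ deriv (F1 δ) s * s := by
  rcases lt_trichotomy s 0 with h | rfl | h
  · have := F1_pos_case δ hδ hδ' (-s) (by linarith)
    have hd : deriv (F1 δ) s = -deriv (F1 δ) (-s) := by
      rw [← deriv_comp_neg]
      congr 1
      funext x
      exact (F1_even δ x).symm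
    rw [F1_even] at this
    rw [hd]
    exact ⟨this.1, by linarith [this.2]⟩
  · simp [F1, hδ]
  · exact F1_pos_case δ hδ hδ' s h
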